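/- Let 0 < p < +∞ and q = +∞. Let μ and ν be non-negative Borel measures on I = (a,b) ⊆ ℝ, let w ∈ B⁺(I), and let u ∈ B⁺(I) satisfy ‖u‖_{∞,(a,t],ν} < ∞ for all t ∈ I and u ≠ 0 ν-a.e. on (a,b). Then there exists a constant c > 0 such that ‖gw‖_{p,(a,b),μ} ≤ c ‖u(x) ‖g‖_{∞,(x,b),μ}‖_{∞,(a,b),ν} for all g ∈ B⁺(I) if and only if A₃ := ( ∫_{(a,b)} ( w(x) / ‖u‖_{∞,(a,x),ν} )^p dμ(x) )^{1/p} < ∞. Moreover, the best possible constant c satisfies c ≈ A₃. -/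

import Mathlib

/-!
Write `U t = ‖u‖_{∞,(a,t),ν}` and `G x = ‖g‖_{∞,(x,b),μ}`. The best constant is exactly `A₃`, so
`C₁ = C₂ = 1` work.

The key point is that `U` and `G` are monotone, so "for each endpoint, almost everywhere" can be
upgraded to "almost everywhere, for every endpoint" by passing through rational endpoints; no Fubini
argument (hence no σ-finiteness) is needed. Thus for `μ`-a.e. `t` we have `g t ≤ G x` for all `x < t`
(`ae_forall_le_eSup_right`), and for `ν`-a.e. `x` we have `u x ≤ U t` for all `t > x`
(`ae_forall_le_eSup_left`).

* Sufficiency: the first fact gives `g t * u x ≤ ‖u G‖_∞` for `ν`-a.e. `x < t`, hence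
  `g t * U t ≤ ‖u G‖_∞` for `μ`-a.e. `t`. Dividing by `U t < ∞` and integrating gives the inequality
  with constant `A₃` (if `A₃ < ∞`, then `w` vanishes a.e. where `U` does).
* Necessity: test with `g = 1 / U`. The second fact gives `G x ≤ 1 / u x` for `ν`-a.e. `x`, so the
  right-hand norm is at most `1`, while the left-hand norm is `A₃`.
-/


open MeasureTheory Set ENNReal

noncomputable section

/-- The `μ`-essential supremum of `f` over `E`:
`‖f‖_{∞,E,μ} = sup {α : μ({y ∈ E : f y ≥ α}) > 0}`. -/
def eSup (μ : Measure ℝ) (E : Set ℝ) (f : ℝ → ℝ≥0∞) : ℝ≥0∞ :=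
  sSup {α : ℝ≥0∞ | 0 < μ {y | y ∈ E ∧ α ≤ f y}}

/-- `‖f‖_{p,E,μ}` for `0 < p ≤ ∞`. -/
def Nrm (p : ℝ≥0∞) (μ : Measure ℝ) (E : Set ℝ) (f : ℝ → ℝ≥0∞) : ℝ≥0∞ :=
  if p = ⊤ then eSup μ E f
  else (∫⁻ x in E, f x ^ p.toReal ∂μ) ^ (1 / p.toReal)

/-- `‖u(x) ‖g‖_{∞,(x,b),μ}‖_{q,(a,b),ν}`. -/
def RHSsup (q : ℝ≥0∞) (a b : ℝ) (μ ν : Measure ℝ) (u g : ℝ → ℝ≥0∞) : ℝ≥0∞ :=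
  Nrm q ν (Ioo a b) (fun x => u x * eSup μ (Ioo x b) g)

/-- The best constant in the inequality
`‖gw‖_{p,(a,b),μ} ≤ c ‖u(x) ‖g‖_{∞,(x,b),μ}‖_{q,(a,b),ν}` over all `g ∈ B⁺((a,b))`. -/
def bestC (p q : ℝ≥0∞) (a b : ℝ) (μ ν : Measure ℝ) (w u : ℝ → ℝ≥0∞) : ℝ≥0∞ :=
  sInf {c : ℝ≥0∞ | ∀ g : ℝ → ℝ≥0∞, Measurable g →
    Nrm p μ (Ioo a b) (fun t => g t * w t) ≤ c * RHSsup q a b μ ν u g}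

lemma eSup_eq_essSup (μ : Measure ℝ) {E : Set ℝ} (hE : MeasurableSet E) (f : ℝ → ℝ≥0∞) :
    eSup μ E f = essSup f (μ.restrict E) := by
  have key : ∀ α : ℝ≥0∞, μ {y | y ∈ E ∧ α ≤ f y} = μ.restrict E {y | α ≤ f y} := by
    intro α
    rw [Measure.restrict_apply' hE, inter_comm]
    rfl
  unfold eSup
  simp only [key]
  apply le_antisymm
  · refine sSup_le fun α hα => ?_
    by_contra! h
    rw [mem_ofPred_eq] at hα
    refine (ne_of_gt hα) ?_
    have h0 := ENNReal.ae_le_essSup (μ := μ.restrict E) f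
    have h1 : ∀ᵐ y ∂(μ.restrict E), ¬ α ≤ f y := by
      filter_upwards [h0] with y hy using not_le.2 (hy.trans_lt h)
    simpa [ae_iff] using h1
  · refine le_of_forall_lt_imp_le_of_dense fun c hc => le_sSup ?_
    rw [mem_ofPred_eq]
    by_contra! h
    refine hc.not_ge (essSup_le_of_ae_le c ?_)
    have h1 : ∀ᵐ y ∂(μ.restrict E), ¬ c ≤ f y := by
      simpa [ae_iff] using h
    filter_upwards [h1] with y hy using (not_le.1 hy).le

lemma ae_le_eSup (μ : Measure ℝ) {E : Set ℝ} (hE : MeasurableSet E) (f : ℝ → ℝ≥0∞) :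
    ∀ᵐ y ∂μ, y ∈ E → f y ≤ eSup μ E f := by
  rw [eSup_eq_essSup μ hE, ← ae_restrict_iff' hE]
  exact ENNReal.ae_le_essSup f

lemma eSup_le {μ : Measure ℝ} {E : Set ℝ} (hE : MeasurableSet E) {f : ℝ → ℝ≥0∞} {c : ℝ≥0∞}
    (h : ∀ᵐ y ∂μ, y ∈ E → f y ≤ c) : eSup μ E f ≤ c := by
  rw [eSup_eq_essSup μ hE]
  exact essSup_le_of_ae_le c ((ae_restrict_iff' hE).2 h)

lemma eSup_mono (μ : Measure ℝ) {E F : Set ℝ} (h : E ⊆ F) (f : ℝ → ℝ≥0∞) :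
    eSup μ E f ≤ eSup μ F f :=
  sSup_le_sSup (ofPred_subset_ofPred.2 fun _ hα =>
    hα.trans_le (measure_mono (ofPred_subset_ofPred.2 fun _ hy => ⟨h hy.1, hy.2⟩)))

/-- The null set outside which `u x ≤ ‖u‖_{∞,(a,t),ν}` can be chosen independently of `t`. -/
lemma ae_forall_le_eSup_left (a : ℝ) (ν : Measure ℝ) (u : ℝ → ℝ≥0∞) :
    ∀ᵐ x ∂ν, a < x → ∀ t, x < t → u x ≤ eSup ν (Ioo a t) u := by
  have h : ∀ᵐ x ∂ν, ∀ r : ℚ, x ∈ Ioo a (r : ℝ) → u x ≤ eSup ν (Ioo a (r : ℝ)) u :=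
    ae_all_iff.2 fun r => ae_le_eSup ν measurableSet_Ioo u
  filter_upwards [h] with x hx hax t hxt
  obtain ⟨r, h1, h2⟩ := exists_rat_btwn hxt
  exact (hx r ⟨hax, h1⟩).trans (eSup_mono ν (Ioo_subset_Ioo_right h2.le) u)

/-- The null set outside which `g t ≤ ‖g‖_{∞,(x,b),μ}` can be chosen independently of `x`. -/
lemma ae_forall_le_eSup_right (b : ℝ) (μ : Measure ℝ) (g : ℝ → ℝ≥0∞) :
    ∀ᵐ t ∂μ, t < b → ∀ x, x < t → g t ≤ eSup μ (Ioo x b) g := by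
  have h : ∀ᵐ t ∂μ, ∀ r : ℚ, t ∈ Ioo (r : ℝ) b → g t ≤ eSup μ (Ioo (r : ℝ) b) g :=
    ae_all_iff.2 fun r => ae_le_eSup μ measurableSet_Ioo g
  filter_upwards [h] with t ht htb x hxt
  obtain ⟨r, h1, h2⟩ := exists_rat_btwn hxt
  exact (ht r ⟨h2, htb⟩).trans (eSup_mono μ (Ioo_subset_Ioo_left h1.le) g)

/-- The pointwise bound `g t * U t ≤ ‖u G‖_∞` behind the sufficiency direction. -/
lemma ae_mul_eSup_le_RHSsup (a b : ℝ) (μ ν : Measure ℝ) (u g : ℝ → ℝ≥0∞) :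
    ∀ᵐ t ∂μ, t ∈ Ioo a b → g t * eSup ν (Ioo a t) u ≤ RHSsup ⊤ a b μ ν u g := by
  filter_upwards [ae_forall_le_eSup_right b μ g] with t ht htI
  rw [eSup_eq_essSup ν measurableSet_Ioo, ← ENNReal.essSup_const_mul,
    ← eSup_eq_essSup ν measurableSet_Ioo]
  apply eSup_le measurableSet_Ioo
  have h := ae_le_eSup ν (measurableSet_Ioo (a := a) (b := b))
    (fun x => u x * eSup μ (Ioo x b) g)
  filter_upwards [h] with x hx hxI
  calc g t * u x ≤ eSup μ (Ioo x b) g * u x := by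
        gcongr
        exact ht htI.2 x hxI.2
    _ = u x * eSup μ (Ioo x b) g := mul_comm _ _
    _ ≤ eSup ν (Ioo a b) (fun x => u x * eSup μ (Ioo x b) g) :=
        hx ⟨hxI.1, hxI.2.trans htI.2⟩
    _ = RHSsup ⊤ a b μ ν u g := by simp [RHSsup, Nrm]

lemma RHSsup_inv_le_one (a b : ℝ) (μ ν : Measure ℝ) (u : ℝ → ℝ≥0∞) :
    RHSsup ⊤ a b μ ν u (fun t => (eSup ν (Ioo a t) u)⁻¹) ≤ 1 := by
  simp only [RHSsup, Nrm, if_true]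
  apply eSup_le measurableSet_Ioo
  filter_upwards [ae_forall_le_eSup_left a ν u] with x hx hxI
  refine le_trans ?_ (ENNReal.mul_inv_le_one (u x))
  gcongr
  exact eSup_le measurableSet_Ioo
    (Filter.Eventually.of_forall fun t ht => ENNReal.inv_le_inv.2 (hx hxI.1 t ht.1))

lemma measurable_eSup_Ioo (a : ℝ) (ν : Measure ℝ) (u : ℝ → ℝ≥0∞) :
    Measurable fun t => eSup ν (Ioo a t) u :=
  Monotone.measurable fun _ _ h => eSup_mono ν (Ioo_subset_Ioo_right h) u

/-- The inequality holds with constant `A₃` when `A₃ < ∞`. -/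
lemma Nrm_le_of_finite (p : ℝ≥0∞) (hp : 0 < p) (hp' : p ≠ ⊤) (a b : ℝ) (μ ν : Measure ℝ)
    (w u g : ℝ → ℝ≥0∞) (hw : Measurable w) (hu : ∀ t ∈ Ioo a b, eSup ν (Ioc a t) u < ⊤)
    (hA : (∫⁻ x in Ioo a b, (w x / eSup ν (Ioo a x) u) ^ p.toReal ∂μ) ^ (1 / p.toReal) < ⊤) :
    Nrm p μ (Ioo a b) (fun t => g t * w t) ≤
      (∫⁻ x in Ioo a b, (w x / eSup ν (Ioo a x) u) ^ p.toReal ∂μ) ^ (1 / p.toReal) *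
        RHSsup ⊤ a b μ ν u g := by
  have hp0 : 0 < p.toReal := ENNReal.toReal_pos hp.ne' hp'
  have hm : Measurable fun x => (w x / eSup ν (Ioo a x) u) ^ p.toReal :=
    (hw.div (measurable_eSup_Ioo a ν u)).pow_const _
  have hfin : ∫⁻ x in Ioo a b, (w x / eSup ν (Ioo a x) u) ^ p.toReal ∂μ ≠ ⊤ :=
    fun h => by simp [h, hp0] at hA
  have hae := (ae_restrict_iff' measurableSet_Ioo).1 (ae_lt_top hm hfin)
  have hpt : ∀ᵐ t ∂μ, t ∈ Ioo a b → (g t * w t) ^ p.toReal ≤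
      RHSsup ⊤ a b μ ν u g ^ p.toReal * (w t / eSup ν (Ioo a t) u) ^ p.toReal := by
    filter_upwards [hae, ae_mul_eSup_le_RHSsup a b μ ν u g] with t h1 h2 htI
    specialize h1 htI
    specialize h2 htI
    rw [← ENNReal.mul_rpow_of_nonneg _ _ hp0.le]
    refine ENNReal.rpow_le_rpow ?_ hp0.le
    have htop : eSup ν (Ioo a t) u ≠ ⊤ :=
      ((eSup_mono ν Ioo_subset_Ioc_self u).trans_lt (hu t htI)).ne
    by_cases h0 : eSup ν (Ioo a t) u = 0
    · have hw0 : w t = 0 := by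
        -- A nonzero `w t` would give `w t / 0 = ∞`, excluded by `A₃ < ∞`.
        by_contra hne
        rw [h0, ENNReal.div_zero hne, ENNReal.top_rpow_of_pos hp0] at h1
        exact lt_irrefl _ h1
      simp [hw0]
    · calc g t * w t = g t * eSup ν (Ioo a t) u * (w t / eSup ν (Ioo a t) u) := by
            rw [mul_assoc, ENNReal.mul_div_cancel h0 htop]
        _ ≤ _ := by gcongr
  rw [Nrm, if_neg hp']
  calc (∫⁻ x in Ioo a b, (g x * w x) ^ p.toReal ∂μ) ^ (1 / p.toReal)
      ≤ (∫⁻ x in Ioo a b, RHSsup ⊤ a b μ ν u g ^ p.toReal *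
          (w x / eSup ν (Ioo a x) u) ^ p.toReal ∂μ) ^ (1 / p.toReal) := by
        refine ENNReal.rpow_le_rpow ?_ (by positivity)
        exact lintegral_mono_ae ((ae_restrict_iff' measurableSet_Ioo).2 hpt)
    _ = _ := by
        rw [lintegral_const_mul _ hm, ENNReal.mul_rpow_of_nonneg _ _ (by positivity),
          ← ENNReal.rpow_mul, mul_one_div_cancel hp0.ne', ENNReal.rpow_one, mul_comm]

/-- Any admissible constant is at least `A₃`, by testing with `g = 1 / ‖u‖_{∞,(a,·),ν}`. -/
lemma le_of_inequality (p : ℝ≥0∞) (hp' : p ≠ ⊤) (a b : ℝ) (μ ν : Measure ℝ)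
    (w u : ℝ → ℝ≥0∞) (c : ℝ≥0∞)
    (hc : ∀ g : ℝ → ℝ≥0∞, Measurable g →
      Nrm p μ (Ioo a b) (fun t => g t * w t) ≤ c * RHSsup ⊤ a b μ ν u g) :
    (∫⁻ x in Ioo a b, (w x / eSup ν (Ioo a x) u) ^ p.toReal ∂μ) ^ (1 / p.toReal) ≤ c := by
  have h := hc _ (measurable_eSup_Ioo a ν u).inv
  rw [Nrm, if_neg hp'] at h
  simp only [div_eq_mul_inv (w _), mul_comm (w _)]
  refine h.trans ?_
  calc c * _ ≤ c * 1 := by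
        gcongr
        exact RHSsup_inv_le_one a b μ ν u
    _ = c := mul_one c

/-- Theorem 3.5 (iii): for `0 < p < ∞` and `q = ∞`, the inequality
`‖gw‖_{p,(a,b),μ} ≤ c ‖u(x) ‖g‖_{∞,(x,b),μ}‖_{∞,(a,b),ν}` holds for all `g ∈ B⁺((a,b))`
iff `A₃ = (∫_{(a,b)} (w(x)/‖u‖_{∞,(a,x),ν})^p dμ(x))^{1/p} < ∞`, and the best constant
satisfies `c ≈ A₃`. -/
theorem statement2 (p : ℝ≥0∞) (hp : 0 < p) (hp' : p ≠ ⊤) :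
    ∃ C₁ C₂ : ℝ≥0∞, 0 < C₁ ∧ C₂ < ⊤ ∧
      ∀ (a b : ℝ), a < b →
      ∀ (μ ν : Measure ℝ) (w u : ℝ → ℝ≥0∞),
        Measurable w → Measurable u →
        (∀ t ∈ Ioo a b, eSup ν (Ioc a t) u < ⊤) →
        (∀ᵐ x ∂ν.restrict (Ioo a b), u x ≠ 0) →
        ((∃ c : ℝ≥0∞, 0 < c ∧ c < ⊤ ∧ ∀ g : ℝ → ℝ≥0∞, Measurable g →
            Nrm p μ (Ioo a b) (fun t => g t * w t) ≤ c * RHSsup ⊤ a b μ ν u g) ↔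
          (∫⁻ x in Ioo a b, (w x / eSup ν (Ioo a x) u) ^ p.toReal ∂μ) ^ (1 / p.toReal) < ⊤) ∧
        C₁ * (∫⁻ x in Ioo a b, (w x / eSup ν (Ioo a x) u) ^ p.toReal ∂μ) ^ (1 / p.toReal) ≤
          bestC p ⊤ a b μ ν w u ∧
        bestC p ⊤ a b μ ν w u ≤
          C₂ * (∫⁻ x in Ioo a b, (w x / eSup ν (Ioo a x) u) ^ p.toReal ∂μ) ^ (1 / p.toReal) := by
  refine ⟨1, 1, one_pos, ENNReal.one_lt_top, ?_⟩
  intro a b _ μ ν w u hw _ hfin _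
  refine ⟨⟨?_, fun hA => ?_⟩, ?_, ?_⟩
  · rintro ⟨c, -, hc, h⟩
    exact (le_of_inequality p hp' a b μ ν w u c h).trans_lt hc
  · refine ⟨_ + 1, by simp, ENNReal.add_lt_top.2 ⟨hA, ENNReal.one_lt_top⟩, fun g _ => ?_⟩
    refine (Nrm_le_of_finite p hp hp' a b μ ν w u g hw hfin hA).trans ?_
    gcongr
    exact le_self_add
  · rw [one_mul]
    exact le_sInf fun c hc => le_of_inequality p hp' a b μ ν w u c hc
  · rw [one_mul]
    rcases eq_top_or_lt_top ((∫⁻ x in Ioo a b,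
      (w x / eSup ν (Ioo a x) u) ^ p.toReal ∂μ) ^ (1 / p.toReal)) with h | h
    · exact le_top.trans_eq h.symm
    · exact sInf_le fun g _ => Nrm_le_of_finite p hp hp' a b μ ν w u g hw hfin h
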